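/- (Tensor-product contraction, tensor trick.) Let (W, δ, h) and (W', δ', h') be cochain complexes of R-modules with contraction homotopies, and set ϖ := id − δ∘h − h∘δ (componentwise on W). Define the tensor product complex by (W ⊗ W')ⁿ := ⊕_{i+j=n} Wⁱ ⊗_R W'ʲ with differential D(x ⊗ y) = δ(x) ⊗ y + (−1)ⁱ x ⊗ δ'(y) for x ∈ Wⁱ, y ∈ W'ʲ, and define H : (W⊗W')ⁿ → (W⊗W')ⁿ⁻¹ by H(x ⊗ y) = h(x) ⊗ y + (−1)ⁱ ϖ(x) ⊗ h'(y). Then D∘D = 0, H∘H = 0, and H∘D∘H = H; that is, (W ⊗ W', D, H) is a contraction. -/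

import Mathlib

/-!
The direct sums `A = ⨁ i, W i` and `B = ⨁ j, W' j` carry ungraded endomorphisms `d`, `h`, `ϖ`
and `d'`, `h'`, and `A` also carries the Koszul sign `s`, which squares to `1`, anticommutes with
`d` and `h`, and commutes with `ϖ`. The degree-`n` part of the tensor product complex embeds into
`A ⊗ B` (`tensIncl_injective`), and under this embedding `D` and `H` become
`d ⊗ 1 + s ⊗ d'` and `h ⊗ 1 + ϖ s ⊗ h'` (`tensIncl_tensD`, `tensIncl_tensH`). All transports
along equalities of degrees disappear in `A ⊗ B`.

What remains is a computation in the ring `End (A ⊗ B)`, where operators on the left factor commute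
with operators on the right factor. It uses `h ϖ = ϖ h = 0`, `d ϖ = ϖ d` and `ϖ ϖ = ϖ`, which follow
from `h h = 0`, `h d h = h` and `d d = 0`. In `H D H` every term then vanishes except `h d h = h`
and `ϖ ϖ s ⊗ h' d' h' = ϖ s ⊗ h'`, whose sum is `H` (`ring_HDH`).
-/

open scoped TensorProduct DirectSum

section TensorContraction

variable {R : Type*} [CommRing R]

/-- Transport a linear map along an equality of degrees. -/
def lcast {R : Type*} [CommRing R] {W : ℤ → Type*} [∀ i, AddCommGroup (W i)]
    [∀ i, Module R (W i)] {a b : ℤ} (hab : a = b) : W a →ₗ[R] W b := by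
  subst hab; exact LinearMap.id

variable {W W' : ℤ → Type*}
  [∀ i, AddCommGroup (W i)] [∀ i, Module R (W i)]
  [∀ i, AddCommGroup (W' i)] [∀ i, Module R (W' i)]

/-- The projection operator `ϖ = id − δ∘h − h∘δ` of a contraction, in degree `m`. -/
def proj (δ : ∀ i, W i →ₗ[R] W (i+1)) (h : ∀ i, W i →ₗ[R] W (i-1)) (m : ℤ) :
    W m →ₗ[R] W m :=
  LinearMap.id - (lcast (show m-1+1 = m by omega)).comp ((δ (m-1)).comp (h m))
    - (lcast (show m+1-1 = m by omega)).comp ((h (m+1)).comp (δ m))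

/-- Degree-`n` part of the tensor product complex: `(W ⊗ W')ⁿ = ⊕_{i+j=n} Wⁱ ⊗ W'ʲ`. -/
abbrev Tens (R : Type*) [CommRing R] (W W' : ℤ → Type*)
    [∀ i, AddCommGroup (W i)] [∀ i, Module R (W i)]
    [∀ i, AddCommGroup (W' i)] [∀ i, Module R (W' i)] (n : ℤ) : Type _ :=
  ⨁ i : ℤ, (W i ⊗[R] W' (n - i))

/-- The tensor product differential `D(x ⊗ y) = δ(x) ⊗ y + (−1)ⁱ x ⊗ δ'(y)`
for `x ∈ Wⁱ`. -/
noncomputable def tensD (δ : ∀ i, W i →ₗ[R] W (i+1)) (δ' : ∀ i, W' i →ₗ[R] W' (i+1)) (n : ℤ) :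
    Tens R W W' n →ₗ[R] Tens R W W' (n+1) :=
  DirectSum.toModule R ℤ (Tens R W W' (n+1)) fun i =>
    (DirectSum.lof R ℤ (fun j => W j ⊗[R] W' (n+1-j)) (i+1)).comp
      (TensorProduct.map (δ i) (lcast (show n-i = n+1-(i+1) by omega)))
    + (((-1 : ℤˣ) ^ i : ℤˣ) : ℤ) •
      ((DirectSum.lof R ℤ (fun j => W j ⊗[R] W' (n+1-j)) i).comp
        (TensorProduct.map LinearMap.id
          ((lcast (show n-i+1 = n+1-i by omega)).comp (δ' (n-i)))))

/-- The tensor product homotopy `H(x ⊗ y) = h(x) ⊗ y + (−1)ⁱ ϖ(x) ⊗ h'(y)`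
for `x ∈ Wⁱ`. -/
noncomputable def tensH (δ : ∀ i, W i →ₗ[R] W (i+1)) (h : ∀ i, W i →ₗ[R] W (i-1))
    (h' : ∀ i, W' i →ₗ[R] W' (i-1)) (n : ℤ) :
    Tens R W W' n →ₗ[R] Tens R W W' (n-1) :=
  DirectSum.toModule R ℤ (Tens R W W' (n-1)) fun i =>
    (DirectSum.lof R ℤ (fun j => W j ⊗[R] W' (n-1-j)) (i-1)).comp
      (TensorProduct.map (h i) (lcast (show n-i = n-1-(i-1) by omega)))
    + (((-1 : ℤˣ) ^ i : ℤˣ) : ℤ) •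
      ((DirectSum.lof R ℤ (fun j => W j ⊗[R] W' (n-1-j)) i).comp
        (TensorProduct.map (proj δ h i)
          ((lcast (show n-i-1 = n-1-i by omega)).comp (h' (n-i)))))

/-- Recast the degree-`n` tensor space along an equality `n = m`. -/
noncomputable def tensCast {n m : ℤ} (hnm : n = m) : Tens R W W' n →ₗ[R] Tens R W W' m := by
  subst hnm; exact LinearMap.id

/-! ### Identities in an associative ring -/

section Algebra

variable {E : Type*} [Ring E] {d h s d' h' : E}

/-- Here `d`, `s` stand for operators on the left tensor factor and `d'` for one on the right;
the cross terms cancel by the Koszul sign rule `s * d = -(d * s)`. -/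
theorem ring_D_sq (hdd : d * d = 0) (hdd' : d' * d' = 0) (hsd : s * d = -(d * s))
    (cdd : d' * d = d * d') (cds : d' * s = s * d') :
    (d + s * d') * (d + s * d') = 0 := by
  have e1 : s * d' * d = -(d * s * d') := by rw [mul_assoc, cdd, ← mul_assoc, hsd, neg_mul]
  have e2 : s * d' * (s * d') = 0 := by
    rw [mul_assoc, ← mul_assoc d', cds, mul_assoc s d', hdd', mul_zero, mul_zero]
  rw [add_mul, mul_add, mul_add, hdd, e1, e2]
  noncomm_ring

theorem ring_h_proj (hhh : h * h = 0) (hhdh : h * d * h = h) :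
    h * (1 - d * h - h * d) = 0 := by
  have : h * (1 - d * h - h * d) = h - h * d * h - h * h * d := by noncomm_ring
  rw [this, hhh, hhdh]; simp

theorem ring_proj_h (hhh : h * h = 0) (hhdh : h * d * h = h) :
    (1 - d * h - h * d) * h = 0 := by
  have : (1 - d * h - h * d) * h = h - d * (h * h) - h * d * h := by noncomm_ring
  rw [this, hhh, hhdh]; simp

theorem ring_H_sq {p : E} (hhh : h * h = 0) (hhh' : h' * h' = 0)
    (hp : h * p = 0) (ph : p * h = 0) (hsh : s * h = -(h * s))
    (chh : h' * h = h * h') (chs : h' * s = s * h') (chp : h' * p = p * h') :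
    (h + p * s * h') * (h + p * s * h') = 0 := by
  have e0 : h * (p * s * h') = 0 := by rw [← mul_assoc, ← mul_assoc, hp]; simp
  have e1 : p * s * h' * h = 0 := by
    rw [mul_assoc, chh, ← mul_assoc, mul_assoc p, hsh, mul_neg, ← mul_assoc, ph]; simp
  have e2 : p * s * h' * (p * s * h') = 0 := by
    rw [mul_assoc (p * s), mul_assoc p s h', ← mul_assoc h', chp, mul_assoc p h',
      ← mul_assoc h', chs, mul_assoc s h', hhh']; simp
  rw [add_mul, mul_add, mul_add, hhh, e0, e1, e2]
  simp

theorem ring_d_proj (hdd : d * d = 0) :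
    d * (1 - d * h - h * d) = (1 - d * h - h * d) * d := by
  have e1 : d * (1 - d * h - h * d) = d - d * d * h - d * h * d := by noncomm_ring
  have e2 : (1 - d * h - h * d) * d = d - d * h * d - h * (d * d) := by noncomm_ring
  rw [e1, e2, hdd]; simp

theorem ring_proj_sq (ph : (1 - d * h - h * d) * h = 0)
    (pd : d * (1 - d * h - h * d) = (1 - d * h - h * d) * d) :
    (1 - d * h - h * d) * (1 - d * h - h * d) = 1 - d * h - h * d := by
  generalize hq : 1 - d * h - h * d = q at *
  have e : q * (1 - d * h - h * d) = q - q * d * h - q * h * d := by noncomm_ring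
  rw [hq] at e
  rw [e, ← pd, mul_assoc, ph]; simp

theorem ring_sign_proj (hsd : s * d = -(d * s)) (hsh : s * h = -(h * s)) :
    s * (1 - d * h - h * d) = (1 - d * h - h * d) * s := by
  have e : s * (1 - d * h - h * d) = s - s * d * h - s * h * d := by noncomm_ring
  rw [e, hsd, hsh, neg_mul, neg_mul, mul_assoc, hsh, mul_assoc, hsd]
  noncomm_ring

/-- After `D * H` is expanded, with the factors of each term sorted in
the order `p`, `d`, `h`, `s`, `d'`, `h'`, all terms of `H * (D * H)` vanish except `h * d * h` and
`p * p * s * (h' * d' * h')`. -/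
theorem ring_HDH {p : E} (hp : h * p = 0) (ph : p * h = 0) (pp : p * p = p) (pd : d * p = p * d)
    (hhh : h * h = 0)
    (hhh' : h' * h' = 0) (hhdh : h * d * h = h) (hhdh' : h' * d' * h' = h')
    (hss : s * s = 1) (hsd : s * d = -(d * s)) (hsh : s * h = -(h * s)) (hsp : s * p = p * s)
    (cdh : d' * h = h * d') (cds : d' * s = s * d') (cdp : d' * p = p * d')
    (chd : h' * d = d * h') (chh : h' * h = h * h') (chs : h' * s = s * h')
    (chp : h' * p = p * h') :
    (h + p * s * h') * ((d + s * d') * (h + p * s * h')) = h + p * s * h' := by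
  have e : (d + s * d') * (h + p * s * h') =
      d * h + p * d * s * h' - h * s * d' + p * d' * h' := by
    have e1 : d * (p * s * h') = p * d * s * h' := by simp only [← mul_assoc, pd]
    have e2 : s * d' * h = -(h * s * d') := by
      rw [mul_assoc, cdh, ← mul_assoc, hsh, neg_mul]
    have e3 : s * d' * (p * s * h') = p * d' * h' := by
      calc s * d' * (p * s * h') = s * (d' * p) * s * h' := by simp only [mul_assoc]
        _ = (s * p) * (d' * s) * h' := by rw [cdp]; simp only [mul_assoc]
        _ = p * (s * s) * d' * h' := by rw [hsp, cds]; simp only [mul_assoc]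
        _ = p * d' * h' := by rw [hss, mul_one]
    rw [add_mul, mul_add, mul_add, e1, e2, e3]
    abel
  have a1 : h * (p * d * s * h') = 0 := by simp only [← mul_assoc, hp, zero_mul]
  have a2 : h * (h * s * d') = 0 := by simp only [← mul_assoc, hhh, zero_mul]
  have a3 : h * (p * d' * h') = 0 := by simp only [← mul_assoc, hp, zero_mul]
  have b0 : p * s * h' * (d * h) = 0 := by
    calc p * s * h' * (d * h) = p * s * (h' * d) * h := by simp only [mul_assoc]
      _ = p * (s * d) * (h' * h) := by rw [chd]; simp only [mul_assoc]
      _ = -(p * d * (s * h) * h') := by rw [hsd, chh]; simp only [mul_assoc, neg_mul, mul_neg]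
      _ = d * (p * h) * s * h' := by
        rw [hsh, ← pd]; simp only [mul_assoc, neg_mul, mul_neg, neg_neg]
      _ = 0 := by simp [ph]
  have b1 : p * s * h' * (p * d * s * h') = 0 := by
    calc p * s * h' * (p * d * s * h') = p * s * (h' * p) * d * s * h' := by
          simp only [mul_assoc]
      _ = p * s * p * (h' * d) * s * h' := by rw [chp]; simp only [mul_assoc]
      _ = p * s * p * d * (h' * s) * h' := by rw [chd]; simp only [mul_assoc]
      _ = p * s * p * d * s * (h' * h') := by rw [chs]; simp only [mul_assoc]
      _ = 0 := by rw [hhh', mul_zero]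
  have b2 : p * s * h' * (h * s * d') = 0 := by
    calc p * s * h' * (h * s * d') = p * s * (h' * h) * s * d' := by simp only [mul_assoc]
      _ = p * (s * h) * h' * s * d' := by rw [chh]; simp only [mul_assoc]
      _ = -(p * h * s * h' * s * d') := by rw [hsh]; simp only [mul_assoc, neg_mul, mul_neg]
      _ = 0 := by simp [ph]
  have b3 : p * s * h' * (p * d' * h') = p * s * h' := by
    calc p * s * h' * (p * d' * h') = p * s * (h' * p) * d' * h' := by simp only [mul_assoc]
      _ = p * (s * p) * (h' * d' * h') := by rw [chp]; simp only [mul_assoc]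
      _ = p * p * s * h' := by rw [hsp, hhdh']; simp only [mul_assoc]
      _ = p * s * h' := by rw [pp]
  rw [e, add_mul, mul_add, mul_sub, mul_add, mul_add, mul_sub, mul_add, a1, a2, a3, b0, b1, b2, b3,
    ← mul_assoc, hhdh]
  abel

/-- The tensor trick for two commuting images `L`, `L'` of rings: the first ring contains the
contraction data `d`, `h` and a sign `s`, the second one the data `d'`, `h'`. -/
theorem ring_contraction {E₁ E₂ : Type*} [Ring E₁] [Ring E₂] (L : E₁ →+* E) (L' : E₂ →+* E)
    (comm : ∀ f g, L' g * L f = L f * L' g) {d h s p : E₁} {d' h' : E₂}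
    (hp' : p = 1 - d * h - h * d) (hdd : d * d = 0) (hhh : h * h = 0) (hhdh : h * d * h = h)
    (hdd' : d' * d' = 0) (hhh' : h' * h' = 0) (hhdh' : h' * d' * h' = h')
    (hss : s * s = 1) (hsd : s * d = -(d * s)) (hsh : s * h = -(h * s)) :
    (L d + L s * L' d') * (L d + L s * L' d') = 0 ∧
    (L h + L p * L s * L' h') * (L h + L p * L s * L' h') = 0 ∧
    (L h + L p * L s * L' h') * ((L d + L s * L' d') * (L h + L p * L s * L' h')) =
      L h + L p * L s * L' h' := by
  have hp := ring_h_proj hhh hhdh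
  have ph := ring_proj_h hhh hhdh
  have pd := ring_d_proj (h := h) hdd
  have pp := ring_proj_sq ph pd
  have hsp := ring_sign_proj hsd hsh
  rw [← hp'] at hp ph pd pp hsp
  refine ⟨ring_D_sq ?_ ?_ ?_ ?_ ?_, ring_H_sq ?_ ?_ ?_ ?_ ?_ ?_ ?_ ?_,
    ring_HDH ?_ ?_ ?_ ?_ ?_ ?_ ?_ ?_ ?_ ?_ ?_ ?_ ?_ ?_ ?_ ?_ ?_ ?_ ?_⟩
  all_goals first
    | exact comm _ _
    | simp only [← map_mul, ← map_neg, hp, ph, pd, pp, hsp, hdd, hhh, hhdh, hdd', hhh', hhdh',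
        hss, hsd, hsh, map_zero, map_one]

end Algebra

/-! ### Passage to the total modules -/

/-- Casts of degrees become invisible in the total module. -/
theorem lof_lcast {a b : ℤ} (hab : a = b) (x : W a) :
    DirectSum.lof R ℤ W b (lcast (R := R) hab x) = DirectSum.lof R ℤ W a x := by
  subst hab; rfl

/-- The endomorphism of the total module `⨁ i, W i` induced by a family of maps
`W i → W (g i)`; here `g` is the effect on degrees. -/
noncomputable def totalMap (g : ℤ → ℤ) (f : ∀ i, W i →ₗ[R] W (g i)) :
    Module.End R (⨁ i, W i) :=
  DirectSum.toModule R ℤ _ fun i => (DirectSum.lof R ℤ W (g i)).comp (f i)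

@[simp] theorem totalMap_lof (g : ℤ → ℤ) (f : ∀ i, W i →ₗ[R] W (g i)) (i : ℤ) (x : W i) :
    totalMap g f (DirectSum.lof R ℤ W i x) = DirectSum.lof R ℤ W (g i) (f i x) := by
  simp [totalMap]

/-- The Koszul sign operator `x ↦ (-1)ⁱ x` for `x ∈ Wⁱ`. -/
noncomputable def signMap (R : Type*) [CommRing R] (W : ℤ → Type*)
    [∀ i, AddCommGroup (W i)] [∀ i, Module R (W i)] : Module.End R (⨁ i, W i) :=
  totalMap (fun i => i) fun i => (((-1 : ℤˣ) ^ i : ℤˣ) : ℤ) • LinearMap.id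

@[simp] theorem signMap_lof (i : ℤ) (x : W i) :
    signMap R W (DirectSum.lof R ℤ W i x) =
      (((-1 : ℤˣ) ^ i : ℤˣ) : ℤ) • DirectSum.lof R ℤ W i x := by
  simp [signMap]

/-- Linear maps out of `⨁ i, W i` agree if they agree on homogeneous elements. -/
theorem total_ext {N : Type*} [AddCommGroup N] [Module R N] {f g : (⨁ i, W i) →ₗ[R] N}
    (hfg : ∀ i x, f (DirectSum.lof R ℤ W i x) = g (DirectSum.lof R ℤ W i x)) : f = g :=
  DirectSum.linearMap_ext R fun i => LinearMap.ext (hfg i)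

theorem signMap_mul_self : signMap R W * signMap R W = 1 := by
  refine total_ext fun i x => ?_
  rw [Module.End.mul_apply, signMap_lof, map_zsmul, signMap_lof, smul_smul, ← Units.val_mul,
    Int.units_mul_self]
  simp

theorem signMap_mul_succ (δ : ∀ i, W i →ₗ[R] W (i+1)) :
    signMap R W * totalMap (· + 1) δ = -(totalMap (· + 1) δ * signMap R W) := by
  refine total_ext fun i x => ?_
  rw [Module.End.mul_apply, LinearMap.neg_apply, Module.End.mul_apply, totalMap_lof, signMap_lof,
    signMap_lof, map_zsmul, totalMap_lof, zpow_add_one]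
  simp

theorem signMap_mul_pred (h : ∀ i, W i →ₗ[R] W (i-1)) :
    signMap R W * totalMap (· - 1) h = -(totalMap (· - 1) h * signMap R W) := by
  refine total_ext fun i x => ?_
  rw [Module.End.mul_apply, LinearMap.neg_apply, Module.End.mul_apply, totalMap_lof, signMap_lof,
    signMap_lof, map_zsmul, totalMap_lof, zpow_sub_one]
  simp

theorem totalMap_proj (δ : ∀ i, W i →ₗ[R] W (i+1)) (h : ∀ i, W i →ₗ[R] W (i-1)) :
    totalMap (fun i => i) (proj δ h) =
      1 - totalMap (· + 1) δ * totalMap (· - 1) h - totalMap (· - 1) h * totalMap (· + 1) δ := by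
  refine total_ext fun i x => ?_
  simp [proj, lof_lcast]

theorem totalMap_succ_sq (δ : ∀ i, W i →ₗ[R] W (i+1))
    (hδδ : ∀ i, (δ (i+1)).comp (δ i) = 0) :
    totalMap (· + 1) δ * totalMap (· + 1) δ = 0 := by
  refine total_ext fun i x => ?_
  have := LinearMap.congr_fun (hδδ i) x
  simp only [LinearMap.comp_apply, LinearMap.zero_apply] at this
  simp [this]

theorem totalMap_pred_sq (h : ∀ i, W i →ₗ[R] W (i-1))
    (hhh : ∀ i, (h (i-1)).comp (h i) = 0) :
    totalMap (· - 1) h * totalMap (· - 1) h = 0 := by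
  refine total_ext fun i x => ?_
  have := LinearMap.congr_fun (hhh i) x
  simp only [LinearMap.comp_apply, LinearMap.zero_apply] at this
  simp [this]

theorem totalMap_hdh (δ : ∀ i, W i →ₗ[R] W (i+1)) (h : ∀ i, W i →ₗ[R] W (i-1))
    (hhδh : ∀ i, (h i).comp
      ((lcast (show i-1+1 = i by omega)).comp ((δ (i-1)).comp (h i))) = h i) :
    totalMap (· - 1) h * totalMap (· + 1) δ * totalMap (· - 1) h = totalMap (· - 1) h := by
  refine total_ext fun i x => ?_
  have := LinearMap.congr_fun (hhδh i) x
  simp only [LinearMap.comp_apply] at this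
  simp only [Module.End.mul_apply, totalMap_lof]
  -- the cast is inserted inside the direct sum so that the hypothesis applies in degree `i`
  rw [← totalMap_lof (· - 1) h (i-1+1), ← lof_lcast (R := R) (show i-1+1 = i by omega),
    totalMap_lof, this]

/-- The inclusion of the degree-`n` part of the tensor product complex into
`(⨁ i, W i) ⊗ (⨁ j, W' j)`. -/
noncomputable def tensIncl (n : ℤ) : Tens R W W' n →ₗ[R] (⨁ i, W i) ⊗[R] (⨁ j, W' j) :=
  DirectSum.toModule R ℤ _ fun i =>
    TensorProduct.map (DirectSum.lof R ℤ W i) (DirectSum.lof R ℤ W' (n - i))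

@[simp] theorem tensIncl_lof (n i : ℤ) (x : W i) (y : W' (n - i)) :
    tensIncl n (DirectSum.lof R ℤ (fun j => W j ⊗[R] W' (n - j)) i (x ⊗ₜ y)) =
      DirectSum.lof R ℤ W i x ⊗ₜ[R] DirectSum.lof R ℤ W' (n - i) y := by
  simp [tensIncl]

/-- A left inverse of `tensIncl n`: the projection onto the summands `Wⁱ ⊗ W'ʲ` with
`i + j = n`. -/
noncomputable def tensRetr (n : ℤ) : (⨁ i, W i) ⊗[R] (⨁ j, W' j) →ₗ[R] Tens R W W' n :=
  TensorProduct.lift <| DirectSum.toModule R ℤ _ fun i => LinearMap.flip <|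
    DirectSum.toModule R ℤ _ fun j =>
      if hj : j = n - i then
        ((TensorProduct.mk R (W i) (W' (n - i))).compr₂
          (DirectSum.lof R ℤ (fun k => W k ⊗[R] W' (n - k)) i)).flip.comp (lcast hj)
      else 0

/-- Linear maps out of the degree-`n` part agree if they agree on homogeneous pure tensors. -/
theorem tens_ext {n : ℤ} {N : Type*} [AddCommGroup N] [Module R N]
    {f g : Tens R W W' n →ₗ[R] N}
    (hfg : ∀ (i : ℤ) (x : W i) (y : W' (n - i)),
      f (DirectSum.lof R ℤ (fun j => W j ⊗[R] W' (n - j)) i (x ⊗ₜ y)) =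
      g (DirectSum.lof R ℤ (fun j => W j ⊗[R] W' (n - j)) i (x ⊗ₜ y))) : f = g :=
  DirectSum.linearMap_ext R fun i => TensorProduct.ext' (hfg i)

theorem tensIncl_injective (n : ℤ) :
    Function.Injective (tensIncl n : Tens R W W' n →ₗ[R] _) := by
  have : (tensRetr n).comp (tensIncl n) = (LinearMap.id : Tens R W W' n →ₗ[R] _) := by
    refine tens_ext fun i x y => ?_
    simp [tensRetr, lcast]
  exact Function.LeftInverse.injective (LinearMap.congr_fun this)

theorem tensIncl_tensCast {n m : ℤ} (hnm : n = m) :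
    (tensIncl m).comp (tensCast hnm) = (tensIncl n : Tens R W W' n →ₗ[R] _) := by
  subst hnm; rfl

/-- The total form `d ⊗ 1 + s ⊗ d'` of the differential, `s` being the Koszul sign. -/
noncomputable def totalD (δ : ∀ i, W i →ₗ[R] W (i+1)) (δ' : ∀ i, W' i →ₗ[R] W' (i+1)) :
    Module.End R ((⨁ i, W i) ⊗[R] (⨁ j, W' j)) :=
  (totalMap (· + 1) δ).rTensor _ +
    (signMap R W).rTensor _ * (totalMap (· + 1) δ').lTensor _

/-- The total form `h ⊗ 1 + ϖ s ⊗ h'` of the homotopy, `s` being the Koszul sign. -/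
noncomputable def totalH (δ : ∀ i, W i →ₗ[R] W (i+1)) (h : ∀ i, W i →ₗ[R] W (i-1))
    (h' : ∀ i, W' i →ₗ[R] W' (i-1)) :
    Module.End R ((⨁ i, W i) ⊗[R] (⨁ j, W' j)) :=
  (totalMap (· - 1) h).rTensor _ +
    (totalMap (fun i => i) (proj δ h)).rTensor _ * (signMap R W).rTensor _ *
      (totalMap (· - 1) h').lTensor _

theorem tensIncl_tensD (δ : ∀ i, W i →ₗ[R] W (i+1)) (δ' : ∀ i, W' i →ₗ[R] W' (i+1)) (n : ℤ) :
    (tensIncl (n+1)).comp (tensD δ δ' n) = (totalD δ δ').comp (tensIncl n) := by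
  refine tens_ext fun i x y => ?_
  simp only [LinearMap.comp_apply, tensD, DirectSum.toModule_lof, LinearMap.add_apply,
    LinearMap.smul_apply, TensorProduct.map_tmul, map_add, map_zsmul, tensIncl_lof, lof_lcast,
    totalD, Module.End.mul_apply, LinearMap.rTensor_tmul, LinearMap.lTensor_tmul, totalMap_lof,
    signMap_lof, LinearMap.id_apply, TensorProduct.smul_tmul']

theorem tensIncl_tensH (δ : ∀ i, W i →ₗ[R] W (i+1)) (h : ∀ i, W i →ₗ[R] W (i-1))
    (h' : ∀ i, W' i →ₗ[R] W' (i-1)) (n : ℤ) :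
    (tensIncl (n-1)).comp (tensH δ h h' n) = (totalH δ h h').comp (tensIncl n) := by
  refine tens_ext fun i x y => ?_
  simp only [LinearMap.comp_apply, tensH, DirectSum.toModule_lof, LinearMap.add_apply,
    LinearMap.smul_apply, TensorProduct.map_tmul, map_add, map_zsmul, tensIncl_lof, lof_lcast,
    totalH, Module.End.mul_apply, LinearMap.rTensor_tmul, LinearMap.lTensor_tmul, totalMap_lof,
    signMap_lof, TensorProduct.smul_tmul']

theorem lTensor_mul_rTensor {A B : Type*} [AddCommGroup A] [Module R A] [AddCommGroup B]
    [Module R B] (f : Module.End R A) (g : Module.End R B) :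
    (g.lTensor A : Module.End R (A ⊗[R] B)) * f.rTensor B = f.rTensor B * g.lTensor A :=
  TensorProduct.ext' fun _ _ => rfl

/-- The tensor trick for endomorphisms of two modules without grading. -/
theorem tensor_end_contraction {A B : Type*} [AddCommGroup A] [Module R A] [AddCommGroup B]
    [Module R B] {d h s p : Module.End R A} {d' h' : Module.End R B}
    (hp' : p = 1 - d * h - h * d) (hdd : d * d = 0) (hhh : h * h = 0) (hhdh : h * d * h = h)
    (hdd' : d' * d' = 0) (hhh' : h' * h' = 0) (hhdh' : h' * d' * h' = h')
    (hss : s * s = 1) (hsd : s * d = -(d * s)) (hsh : s * h = -(h * s))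
    {D H : Module.End R (A ⊗[R] B)}
    (hD : D = d.rTensor B + s.rTensor B * d'.lTensor A)
    (hH : H = h.rTensor B + p.rTensor B * s.rTensor B * h'.lTensor A) :
    D * D = 0 ∧ H * H = 0 ∧ H * (D * H) = H := by
  subst hD hH
  exact ring_contraction (E := Module.End R (A ⊗[R] B))
    (Module.End.rTensorAlgHom R A B : Module.End R A →+* Module.End R (A ⊗[R] B))
    (Module.End.lTensorAlgHom R B A : Module.End R B →+* Module.End R (A ⊗[R] B))
    lTensor_mul_rTensor hp' hdd hhh hhdh hdd' hhh' hhdh' hss hsd hsh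

/-- The three contraction identities for the total operators on `(⨁ i, W i) ⊗ (⨁ j, W' j)`. -/
theorem total_contraction
    (δ : ∀ i, W i →ₗ[R] W (i+1)) (h : ∀ i, W i →ₗ[R] W (i-1))
    (δ' : ∀ i, W' i →ₗ[R] W' (i+1)) (h' : ∀ i, W' i →ₗ[R] W' (i-1))
    (hδδ : ∀ i, (δ (i+1)).comp (δ i) = 0)
    (hhh : ∀ i, (h (i-1)).comp (h i) = 0)
    (hhδh : ∀ i, (h i).comp
      ((lcast (show i-1+1 = i by omega)).comp ((δ (i-1)).comp (h i))) = h i)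
    (hδδ' : ∀ i, (δ' (i+1)).comp (δ' i) = 0)
    (hhh' : ∀ i, (h' (i-1)).comp (h' i) = 0)
    (hhδh' : ∀ i, (h' i).comp
      ((lcast (show i-1+1 = i by omega)).comp ((δ' (i-1)).comp (h' i))) = h' i) :
    totalD δ δ' * totalD δ δ' = 0 ∧ totalH δ h h' * totalH δ h h' = 0 ∧
      totalH δ h h' * (totalD δ δ' * totalH δ h h') = totalH δ h h' := by
  exact tensor_end_contraction (totalMap_proj δ h) (totalMap_succ_sq δ hδδ)
    (totalMap_pred_sq h hhh) (totalMap_hdh δ h hhδh) (totalMap_succ_sq δ' hδδ')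
    (totalMap_pred_sq h' hhh') (totalMap_hdh δ' h' hhδh') signMap_mul_self
    (signMap_mul_succ δ) (signMap_mul_pred h) rfl rfl

/-- tensor-product contraction, tensor trick: for cochain complexes
`(W, δ, h)` and `(W', δ', h')` with contraction homotopies, `(W ⊗ W', D, H)` is a
contraction: `D∘D = 0`, `H∘H = 0`, `H∘D∘H = H`. -/
theorem tensor_product_contraction
    (δ : ∀ i, W i →ₗ[R] W (i+1)) (h : ∀ i, W i →ₗ[R] W (i-1))
    (δ' : ∀ i, W' i →ₗ[R] W' (i+1)) (h' : ∀ i, W' i →ₗ[R] W' (i-1))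
    (hδδ : ∀ i, (δ (i+1)).comp (δ i) = 0)
    (hhh : ∀ i, (h (i-1)).comp (h i) = 0)
    (hhδh : ∀ i, (h i).comp
      ((lcast (show i-1+1 = i by omega)).comp ((δ (i-1)).comp (h i))) = h i)
    (hδδ' : ∀ i, (δ' (i+1)).comp (δ' i) = 0)
    (hhh' : ∀ i, (h' (i-1)).comp (h' i) = 0)
    (hhδh' : ∀ i, (h' i).comp
      ((lcast (show i-1+1 = i by omega)).comp ((δ' (i-1)).comp (h' i))) = h' i) :
    ∀ (n : ℤ),
      (tensD δ δ' (n+1)).comp (tensD δ δ' n) = 0 ∧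
      (tensH δ h h' (n-1)).comp (tensH δ h h' n) = 0 ∧
      (tensH δ h h' (n-1+1)).comp ((tensD δ δ' (n-1)).comp (tensH δ h h' n)) =
        (tensCast (show n-1 = n-1+1-1 by omega)).comp (tensH δ h h' n) := by
  intro n
  obtain ⟨hDD, hHH, hHDH⟩ := total_contraction δ h δ' h' hδδ hhh hhδh hδδ' hhh' hhδh'
  refine ⟨?_, ?_, ?_⟩
  · refine LinearMap.ext fun x => tensIncl_injective _ ?_
    have e1 := fun n x => LinearMap.congr_fun (tensIncl_tensD δ δ' n) x
    have e := LinearMap.congr_fun hDD (tensIncl n x)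
    simp only [LinearMap.comp_apply, Module.End.mul_apply] at e e1 ⊢
    rw [e1, e1, e]; simp
  · refine LinearMap.ext fun x => tensIncl_injective _ ?_
    have e1 := fun n x => LinearMap.congr_fun (tensIncl_tensH δ h h' n) x
    have e := LinearMap.congr_fun hHH (tensIncl n x)
    simp only [LinearMap.comp_apply, Module.End.mul_apply] at e e1 ⊢
    rw [e1, e1, e]; simp
  · refine LinearMap.ext fun x => tensIncl_injective _ ?_
    have e1 := fun n x => LinearMap.congr_fun (tensIncl_tensD δ δ' n) x
    have e2 := fun n x => LinearMap.congr_fun (tensIncl_tensH δ h h' n) x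
    have e3 := LinearMap.congr_fun (tensIncl_tensCast (R := R) (W := W) (W' := W')
      (show n-1 = n-1+1-1 by omega)) (tensH δ h h' n x)
    have e := LinearMap.congr_fun hHDH (tensIncl n x)
    simp only [LinearMap.comp_apply, Module.End.mul_apply] at e e1 e2 e3 ⊢
    rw [e2, e1, e2, e, e3, e2]

end TensorContraction
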